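/- A permutation w ∈ S_n is smooth (i.e., avoids the patterns 3412 and 4231) if and only if ℓ(w) equals the number of transpositions T_{i,j} with T_{i,j} ≤ w in Bruhat order. -/

import Mathlib

open Equiv

/-- Number of inversions (Coxeter length) of a permutation of ℕ. -/
noncomputable def invNum (w : Perm ℕ) : ℕ :=
  Set.ncard {p : ℕ × ℕ | p.1 < p.2 ∧ w p.2 < w p.1}

/-- Strong Bruhat order on (finitary) permutations of ℕ. -/
def BruhatLE (x y : Perm ℕ) : Prop :=
  Relation.ReflTransGen
    (fun u v => (∃ a b : ℕ, a < b ∧ v = u * Equiv.swap a b) ∧ invNum u < invNum v) x y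

def BruhatLT (x y : Perm ℕ) : Prop := BruhatLE x y ∧ x ≠ y

/-- w avoids the pattern 3412. -/
def Avoids3412 (w : Perm ℕ) : Prop :=
  ¬ ∃ a b c d : ℕ, a < b ∧ b < c ∧ c < d ∧ w c < w d ∧ w d < w a ∧ w a < w b

/-- w avoids the pattern 4231. -/
def Avoids4231 (w : Perm ℕ) : Prop :=
  ¬ ∃ a b c d : ℕ, a < b ∧ b < c ∧ c < d ∧ w d < w b ∧ w b < w c ∧ w c < w a

theorem inv_ap (w : Perm ℕ) (p : ℕ) : w⁻¹ (w p) = p := w.symm_apply_apply p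
theorem ap_inv (w : Perm ℕ) (p : ℕ) : w (w⁻¹ p) = p := w.apply_symm_apply p

/-- Running maximum. -/
def MX (w : Perm ℕ) (i : ℕ) : ℕ := (Finset.range (i+1)).sup w

def mn (w : Perm ℕ) (i : ℕ) : ℕ := min (MX w i) (MX w⁻¹ i)

theorem le_MX (w : Perm ℕ) {a i : ℕ} (h : a ≤ i) : w a ≤ MX w i :=
  Finset.le_sup (f := w) (by simp; omega)

theorem MX_le (w : Perm ℕ) {i b : ℕ} (h : ∀ a ≤ i, w a ≤ b) : MX w i ≤ b :=
  Finset.sup_le (fun a ha => h a (by simp at ha; omega))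

theorem exists_MX (w : Perm ℕ) (i : ℕ) : ∃ a ≤ i, MX w i = w a := by
  obtain ⟨a, ha, h⟩ := Finset.exists_mem_eq_sup (Finset.range (i+1)) ⟨0, by simp⟩ w
  exact ⟨a, by simp at ha; omega, h⟩

theorem le_NX (w : Perm ℕ) {p i : ℕ} (h : w p ≤ i) : p ≤ MX w⁻¹ i := by
  have := le_MX w⁻¹ h
  simpa using this

theorem exists_NX (w : Perm ℕ) (i : ℕ) : ∃ p, w p ≤ i ∧ MX w⁻¹ i = p := by
  obtain ⟨a, ha, h⟩ := exists_MX w⁻¹ i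
  exact ⟨w⁻¹ a, by simpa using ha, h⟩

theorem pigeon (w : Perm ℕ) (A B : Finset ℕ) (h : ∀ a ∈ A, w a ∈ B) : A.card ≤ B.card :=
  Finset.card_le_card_of_injOn w h w.injective.injOn

theorem self_le_MX (w : Perm ℕ) (i : ℕ) : i ≤ MX w i := by
  have := pigeon w (Finset.range (i+1)) (Finset.range (MX w i + 1)) (by
    intro a ha
    have := le_MX w (a := a) (i := i) (by simp at ha; omega)
    simp; omega)
  simpa using this

def Fx (n : ℕ) (w : Perm ℕ) : Prop := ∀ k, n ≤ k → w k = k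

theorem Fx.inv {n : ℕ} {w : Perm ℕ} (h : Fx n w) : Fx n w⁻¹ := by
  intro k hk
  rw [Perm.inv_eq_iff_eq, h k hk]

theorem Fx.lt {n : ℕ} {w : Perm ℕ} (h : Fx n w) {k : ℕ} (hk : k < n) : w k < n := by
  by_contra hc
  have := h (w k) (by omega)
  have := w.injective this
  omega

theorem Fx.mono {n m : ℕ} {w : Perm ℕ} (h : Fx n w) (hm : n ≤ m) : Fx m w :=
  fun k hk => h k (by omega)

def InvS (w : Perm ℕ) : Set (ℕ × ℕ) := {p : ℕ × ℕ | p.1 < p.2 ∧ w p.2 < w p.1}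

theorem Fx.invS_lt {n : ℕ} {w : Perm ℕ} (h : Fx n w) {a b : ℕ} (hab : a < b) (hw : w b < w a) :
    b < n := by
  by_contra hc
  have h1 := h b (by omega)
  by_cases ha : n ≤ a
  · have := h a ha; omega
  · have := h.lt (k := a) (by omega); omega

theorem Fx.finite {n : ℕ} {w : Perm ℕ} (h : Fx n w) : (InvS w).Finite := by
  apply Set.Finite.subset (Finset.finite_toSet (Finset.range n ×ˢ Finset.range n))
  rintro ⟨a, b⟩ ⟨h1, h2⟩
  have := h.invS_lt h1 h2
  simp at *; omega

theorem invNum_inv (w : Perm ℕ) : invNum w⁻¹ = invNum w := by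
  change (InvS w⁻¹).ncard = (InvS w).ncard
  have : InvS w⁻¹ = (fun p : ℕ × ℕ => (w p.2, w p.1)) '' InvS w := by
    ext ⟨a, b⟩
    simp only [InvS, Set.mem_ofPred_eq, Set.mem_image, Prod.exists, Prod.mk.injEq]
    constructor
    · rintro ⟨h1, h2⟩
      exact ⟨w⁻¹ b, w⁻¹ a, ⟨h2, by rwa [ap_inv, ap_inv]⟩, ap_inv _ _, ap_inv _ _⟩
    · rintro ⟨c, d, ⟨h1, h2⟩, rfl, rfl⟩
      exact ⟨h2, by rwa [inv_ap, inv_ap]⟩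
  rw [this, Set.ncard_image_of_injective]
  rintro ⟨a, b⟩ ⟨c, d⟩ h
  simp at h
  simp [h]

/-- The swap increases length. -/
theorem invNum_lt_swap {n : ℕ} {u : Perm ℕ} (h : Fx n u) {a b : ℕ} (hab : a < b) (hu : u a < u b) :
    invNum u < invNum (u * swap a b) := by
  change (InvS u).ncard < (InvS (u * swap a b)).ncard
  have hF : Fx (max n (b+1)) (u * swap a b) := by
    intro k hk
    have : swap a b k = k := swap_apply_of_ne_of_ne (by omega) (by omega)
    simp [this]
    exact h k (by omega)
  set s := swap a b with hs
  have hss : ∀ x, s (s x) = x := fun x => by simp [hs]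
  have hsd : ∀ x, s x = if x = a then b else if x = b then a else x := fun x => swap_apply_def a b x
  let f : ℕ × ℕ → ℕ × ℕ := fun p => if s p.1 < s p.2 then (s p.1, s p.2) else p
  have hinj : Set.InjOn f (InvS u) := by
    rintro ⟨i, j⟩ ⟨h1, h2⟩ ⟨k, l⟩ ⟨h3, h4⟩ hf
    simp only [f] at hf h1 h2 h3 h4
    split_ifs at hf with c1 c2 c2
    · simp at hf; simp [hf]
    · simp at hf
      exfalso; apply c2; simp [← hf, hss, h1]
    · simp at hf
      exfalso; apply c1; simp [hf, hss, h3]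
    · exact hf
  rw [← hinj.ncard_image]
  apply Set.ncard_lt_ncard _ hF.finite
  rw [Set.ssubset_iff_exists]
  refine ⟨?_, (a, b), ?_, ?_⟩
  · rintro _ ⟨⟨i, j⟩, ⟨h1, h2⟩, rfl⟩
    simp only [f] at h1 h2 ⊢
    split_ifs with c
    · exact ⟨c, by simpa [hss] using h2⟩
    · refine ⟨h1, ?_⟩
      simp only [Perm.mul_apply]
      simp only [hsd] at c ⊢
      grind
  · refine ⟨hab, ?_⟩
    simp [hs, hu]
  · rintro ⟨⟨i, j⟩, ⟨h1, h2⟩, h3⟩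
    simp only [f] at h1 h2 h3
    split_ifs at h3 with c
    · simp at h3
      have e1 := hss i
      have e2 := hss j
      rw [h3.1] at e1; rw [h3.2] at e2
      simp only [hsd] at e1 e2
      grind
    · simp at h3; rw [h3.1, h3.2] at h2; omega

theorem Fx.mul_swap {n : ℕ} {u : Perm ℕ} (h : Fx n u) (a b : ℕ) :
    Fx (max n (max a b + 1)) (u * swap a b) := by
  intro k hk
  have : swap a b k = k := swap_apply_of_ne_of_ne (by omega) (by omega)
  simp [this]
  exact h k (by omega)

theorem lt_of_invNum_lt {n : ℕ} {u : Perm ℕ} (h : Fx n u) {a b : ℕ} (hab : a < b)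
    (hi : invNum u < invNum (u * swap a b)) : u a < u b := by
  by_contra hc
  have hne : u a ≠ u b := fun e => by have := u.injective e; omega
  have := invNum_lt_swap (h.mul_swap a b) hab (by simp; omega)
  simp [mul_assoc] at this
  omega

def TC (w : Perm ℕ) (i j : ℕ) : Prop := (∃ a ≤ i, j ≤ w a) ∧ (∃ b, j ≤ b ∧ w b ≤ i)

theorem TC_of_le {i j : ℕ} (hij : i < j) {w : Perm ℕ} (h : BruhatLE (swap i j) w) : TC w i j := by
  suffices (∃ n, Fx n w) ∧ TC w i j from this.2
  induction h with
  | refl =>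
    refine ⟨⟨j+1, ?_⟩, ⟨i, le_rfl, by simp⟩, ⟨j, le_rfl, by simp⟩⟩
    intro k hk
    exact swap_apply_of_ne_of_ne (by omega) (by omega)
  | tail _ h2 ih =>
    obtain ⟨⟨a, b, hab, rfl⟩, hi⟩ := h2
    obtain ⟨⟨n, hn⟩, ⟨c, hc, hc'⟩, ⟨e, he, he'⟩⟩ := ih
    have hlt := lt_of_invNum_lt hn hab hi
    refine ⟨⟨_, hn.mul_swap a b⟩, ?_, ?_⟩
    · by_cases h1 : c = a ∨ c = b
      · refine ⟨a, by omega, ?_⟩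
        simp; rcases h1 with rfl | rfl <;> omega
      · refine ⟨c, hc, ?_⟩
        simp [swap_apply_of_ne_of_ne (a := a) (b := b) (x := c) (by tauto) (by tauto), hc']
    · by_cases h1 : e = a ∨ e = b
      · refine ⟨b, by omega, ?_⟩
        simp; rcases h1 with rfl | rfl <;> omega
      · refine ⟨e, he, ?_⟩
        simp [swap_apply_of_ne_of_ne (a := a) (b := b) (x := e) (by tauto) (by tauto), he']

/-- If no inversion can be removed keeping `TC`, then `w` is the transposition. -/
theorem exists_removable {i j : ℕ} (hij : i < j) {w : Perm ℕ} (h : TC w i j)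
    (hno : ∀ c d, c < d → w d < w c → ¬ TC (w * swap c d) i j) : w = swap i j := by
  obtain ⟨⟨a, ha, ha'⟩, ⟨b, hb, hb'⟩⟩ := h
  have key : ∀ c d, c < d → w d < w c →
      ¬ ((∃ a ≤ i, j ≤ w (if a = c then d else if a = d then c else a)) ∧
        (∃ b, j ≤ b ∧ w (if b = c then d else if b = d then c else b) ≤ i)) := by
    intro c d h1 h2 h3
    apply hno c d h1 h2
    simpa only [TC, Perm.mul_apply, swap_apply_def] using h3
  have hinj : ∀ x y, w x = w y → x = y := fun x y e => w.injective e
  have inc : ∀ c d, c < d → c ≠ a → c ≠ b → d ≠ a → d ≠ b → w c < w d := by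
    intro c d h1 h2 h3 h4 h5
    by_contra hc
    have hne : w c ≠ w d := fun e => by have := hinj _ _ e; omega
    apply key c d h1 (by omega)
    refine ⟨⟨a, ha, ?_⟩, ⟨b, hb, ?_⟩⟩
    · rw [if_neg (by omega), if_neg (by omega)]; exact ha'
    · rw [if_neg (by omega), if_neg (by omega)]; exact hb'
  have ia : ∀ d, a < d → d ≠ b → (d ≤ i ∨ j ≤ w d) → w a < w d := by
    intro d h1 h2 h3
    by_contra hc
    have hne : w a ≠ w d := fun e => by have := hinj _ _ e; omega
    apply key a d h1 (by omega)
    refine ⟨?_, ⟨b, hb, ?_⟩⟩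
    · rcases h3 with h3 | h3
      · refine ⟨d, h3, ?_⟩
        rw [if_neg (by omega), if_pos rfl]; exact ha'
      · refine ⟨a, ha, ?_⟩
        rw [if_pos rfl]; exact h3
    · rw [if_neg (by omega), if_neg (by omega)]; exact hb'
  have ib : ∀ c, c < b → c ≠ a → (j ≤ c ∨ w c ≤ i) → w c < w b := by
    intro c h1 h2 h3
    by_contra hc
    have hne : w c ≠ w b := fun e => by have := hinj _ _ e; omega
    apply key c b h1 (by omega)
    refine ⟨⟨a, ha, ?_⟩, ?_⟩
    · rw [if_neg (by omega), if_neg (by omega)]; exact ha'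
    · rcases h3 with h3 | h3
      · refine ⟨c, h3, ?_⟩
        rw [if_pos rfl]; exact hb'
      · refine ⟨b, hb, ?_⟩
        rw [if_neg (by omega), if_pos rfl]; exact h3
  have hai : a = i := by
    by_contra hne
    have h1 := ia (a+1) (by omega) (by omega) (Or.inl (by omega))
    have := pigeon w⁻¹ (Finset.range (w (a+1))) (insert b (Finset.range (a+1))) (by
      intro v hv
      obtain ⟨p, rfl⟩ := w.surjective v
      simp at hv
      simp only [inv_ap, Finset.mem_insert, Finset.mem_range]
      by_contra hc
      have this_1 := inc (a+1) p
      have : p ≠ a+1 := by rintro rfl; omega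
      have := this_1 (by omega) (by omega) (by omega) (by omega) (by omega)
      omega)
    have h2 := Finset.card_insert_le b (Finset.range (a+1))
    simp only [Finset.card_range] at this h2
    omega
  have hbj : b = j := by
    by_contra hne
    have h1 := ib (b-1) (by omega) (by omega) (Or.inl (by omega))
    have := pigeon w ((Finset.range b).erase a) (Finset.range (w b)) (by
      intro p hp
      simp at hp ⊢
      have := inc p (b-1)
      by_cases hpb : p = b-1
      · rw [hpb]; exact h1
      · have := this (by omega) (by omega) (by omega) (by omega) (by omega)
        omega)
    rw [Finset.card_erase_of_mem (by simp; omega)] at this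
    simp only [Finset.card_range] at this
    omega
  have hwa : w a = j := by
    by_contra hne
    obtain ⟨d, hd⟩ := w.surjective (w a - 1)
    have hda : d < a := by
      by_contra hc
      have : d ≠ a := by rintro rfl; omega
      have := ia d (by omega) (by rintro rfl; omega) (Or.inr (by omega))
      omega
    have := pigeon w⁻¹ ((Finset.range (w a)).erase (w b)) (Finset.range (d+1)) (by
      intro v hv
      obtain ⟨p, rfl⟩ := w.surjective v
      simp at hv
      simp only [inv_ap, Finset.mem_range]
      by_contra hc
      have hpa : p ≠ a := by rintro rfl; omega
      have := inc d p (by omega) (by omega) (by omega) hpa hv.1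
      omega)
    rw [Finset.card_erase_of_mem (by simp; omega)] at this
    simp only [Finset.card_range] at this
    omega
  have hwb : w b = i := by
    by_contra hne
    obtain ⟨d, hd⟩ := w.surjective (w b + 1)
    have hda : b < d := by
      by_contra hc
      have : d ≠ b := by rintro rfl; omega
      have := ib d (by omega) (by rintro rfl; omega) (Or.inr (by omega))
      omega
    have := pigeon w ((Finset.range d).erase a |>.erase b) (Finset.range (w b)) (by
      intro p hp
      simp at hp ⊢
      have := inc p d hp.2.2 hp.2.1 hp.1 (by omega) (by omega)
      have : w p ≠ w b := fun e => hp.1 (hinj _ _ e)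
      omega)
    rw [Finset.card_erase_of_mem (by simp; omega), Finset.card_erase_of_mem (by simp; omega)] at this
    simp only [Finset.card_range] at this
    omega
  subst hai hbj
  set v := w * swap a b with hv
  have hmono : StrictMono v := by
    have hva : v a = a := by simp [hv, hwb]
    have hvb : v b = b := by simp [hv, hwa]
    have hvo : ∀ x, x ≠ a → x ≠ b → v x = w x := fun x h1 h2 => by
      simp [hv, swap_apply_of_ne_of_ne h1 h2]
    have vinj : ∀ x y, v x = v y → x = y := fun x y e => v.injective e
    have vinc : ∀ c d, c < d → c ≠ a → c ≠ b → d ≠ a → d ≠ b → v c < v d := by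
      intro c d h1 h2 h3 h4 h5
      rw [hvo c h2 h3, hvo d h4 h5]; exact inc c d h1 h2 h3 h4 h5
    have fixed : ∀ x, v x = x := by
      intro x
      induction x using Nat.strong_induction_on with
      | _ x ih =>
        by_cases h1 : x = a
        · rw [h1, hva]
        by_cases h2 : x = b
        · rw [h2, hvb]
        have hge : x ≤ v x := by
          by_contra hc
          have := vinj _ _ (ih (v x) (by omega))
          omega
        obtain ⟨y, hy⟩ := v.surjective x
        have hyx : x ≤ y := by
          by_contra hc
          have := ih y (by omega)
          omega
        by_contra hne
        have : x < y := by
          rcases Nat.lt_or_ge x y with h | h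
          · exact h
          · have : x = y := by omega
            subst this; omega
        have := vinc x y this h1 h2 (by rintro rfl; omega) (by rintro rfl; omega)
        omega
    intro x y hxy
    rw [fixed, fixed]; exact hxy
  have hv1 : v = 1 := by
    ext x
    have h1 := hmono.le_apply (x := x)
    have hm2 : StrictMono (v⁻¹ : Perm ℕ) := by
      intro x y hxy
      have := hmono.lt_iff_lt (a := v⁻¹ x) (b := v⁻¹ y)
      simp at this
      exact this.1 hxy
    have h2 := hm2.le_apply (x := v x)
    simp at h2 ⊢
    omega
  have : w = v * swap a b := by simp [hv, mul_assoc]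
  rw [this, hv1, one_mul]

theorem le_of_TC {i j : ℕ} (hij : i < j) : ∀ (m : ℕ) (w : Perm ℕ), invNum w = m → (∃ n, Fx n w) →
    TC w i j → BruhatLE (swap i j) w := by
  intro m
  induction m using Nat.strong_induction_on with
  | _ m ih =>
    intro w hm ⟨n, hn⟩ hT
    by_cases hno : ∀ c d, c < d → w d < w c → ¬ TC (w * swap c d) i j
    · rw [exists_removable hij hT hno]
      exact Relation.ReflTransGen.refl
    · push Not at hno
      obtain ⟨c, d, hcd, hw, hT'⟩ := hno
      have hF := hn.mul_swap c d
      have hlt := invNum_lt_swap hF hcd (by simpa using hw)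
      have e : w * swap c d * swap c d = w := by simp [mul_assoc]
      rw [e] at hlt
      have := ih _ (by omega) (w * swap c d) rfl ⟨_, hF⟩ hT'
      exact Relation.ReflTransGen.tail this ⟨⟨c, d, hcd, e.symm⟩, hlt⟩

theorem TC_iff (w : Perm ℕ) (i j : ℕ) : TC w i j ↔ j ≤ mn w i := by
  unfold TC mn
  rw [le_min_iff]
  constructor
  · rintro ⟨⟨a, ha, h⟩, ⟨b, hb, h'⟩⟩
    exact ⟨h.trans (le_MX w ha), hb.trans (le_NX w h')⟩
  · rintro ⟨h1, h2⟩
    obtain ⟨a, ha, e⟩ := exists_MX w i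
    obtain ⟨p, hp, e'⟩ := exists_NX w i
    exact ⟨⟨a, ha, by omega⟩, ⟨p, by omega, hp⟩⟩

theorem MX_lt {n : ℕ} {w : Perm ℕ} (h : Fx n w) {i : ℕ} (hi : i < n) : MX w i < n := by
  obtain ⟨a, ha, e⟩ := exists_MX w i
  rw [e]; exact h.lt (by omega)

theorem MX_ge {n : ℕ} {w : Perm ℕ} (h : Fx n w) {i : ℕ} (hi : n ≤ i) : MX w i ≤ i := by
  have := MX_lt (h.mono (m := i+1) (by omega)) (i := i) (by omega)
  omega

theorem count_swaps {n : ℕ} {w : Perm ℕ} (h : Fx n w) :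
    Set.ncard {t : Perm ℕ | t.IsSwap ∧ BruhatLE t w} + ∑ i ∈ Finset.range n, i
      = ∑ i ∈ Finset.range n, mn w i := by
  have e : {t : Perm ℕ | t.IsSwap ∧ BruhatLE t w} = (fun p : (_ : ℕ) × ℕ => swap p.1 p.2) ''
      ((Finset.range n).sigma (fun i => Finset.Ioc i (mn w i)) : Set ((_ : ℕ) × ℕ)) := by
    ext t
    simp only [Set.mem_ofPred_eq, Set.mem_image, Finset.mem_coe, Finset.mem_sigma, Finset.mem_range,
      Finset.mem_Ioc, Sigma.exists]
    constructor
    · rintro ⟨⟨x, y, hxy, rfl⟩, hle⟩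
      have main : ∀ x y : ℕ, x < y → BruhatLE (swap x y) w → ∃ a b, (a < n ∧ a < b ∧ b ≤ mn w a) ∧
          swap a b = swap x y := by
        intro x y hxy hle
        have h1 := (TC_iff _ _ _).1 (TC_of_le hxy hle)
        refine ⟨x, y, ⟨?_, hxy, h1⟩, rfl⟩
        by_contra hc
        have := MX_ge h (i := x) (by omega)
        have : mn w x ≤ MX w x := min_le_left _ _
        omega
      rcases lt_or_gt_of_ne hxy with h1 | h1
      · exact main x y h1 hle
      · rw [swap_comm] at hle ⊢
        exact main y x h1 hle
    · rintro ⟨a, b, ⟨h1, h2, h3⟩, rfl⟩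
      exact ⟨⟨a, b, by omega, rfl⟩, le_of_TC h2 _ w rfl ⟨n, h⟩ ((TC_iff _ _ _).2 h3)⟩
  rw [e, Set.ncard_image_of_injOn, Set.ncard_coe_finset, Finset.card_sigma, ← Finset.sum_add_distrib]
  · apply Finset.sum_congr rfl
    intro i _
    have : i ≤ mn w i := le_min (self_le_MX _ _) (self_le_MX _ _)
    simp; omega
  · rintro ⟨a, b⟩ h1 ⟨c, d⟩ h2 h3
    simp at h1 h2 h3
    have e1 := congrArg (fun f => f a) h3
    have e2 := congrArg (fun f => f b) h3
    simp [swap_apply_def] at e1 e2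
    have : a = c ∧ b = d := by grind
    simp [this]

/-- The cycle deleting position `d`. -/
def cyc (d n : ℕ) (h : d ≤ n) : Perm ℕ where
  toFun i := if i < d then i else if i < n then i + 1 else if i = n then d else i
  invFun i := if i < d then i else if i = d then n else if i ≤ n then i - 1 else i
  left_inv i := by grind
  right_inv i := by grind

theorem cyc_apply (d n : ℕ) (h : d ≤ n) (i : ℕ) :
    cyc d n h i = if i < d then i else if i < n then i + 1 else if i = n then d else i := rfl

theorem cyc_lt {d n : ℕ} (h : d ≤ n) {i : ℕ} (hi : i < d) : cyc d n h i = i := by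
  rw [cyc_apply, if_pos hi]
theorem cyc_mid {d n : ℕ} (h : d ≤ n) {i : ℕ} (hi : d ≤ i) (hn : i < n) :
    cyc d n h i = i + 1 := by
  rw [cyc_apply, if_neg (by omega), if_pos hn]
theorem cyc_n {d n : ℕ} (h : d ≤ n) : cyc d n h n = d := by
  rw [cyc_apply, if_neg (by omega), if_neg (by omega), if_pos rfl]
theorem cyc_gt {d n : ℕ} (h : d ≤ n) {i : ℕ} (hi : n < i) : cyc d n h i = i := by
  rw [cyc_apply, if_neg (by omega), if_neg (by omega), if_neg (by omega)]

theorem cyc_mono {d n : ℕ} (h : d ≤ n) {i j : ℕ} (hij : i < j) (hj : j < n) :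
    cyc d n h i < cyc d n h j := by
  simp only [cyc_apply]; grind

theorem cyc_surj {d n : ℕ} (h : d ≤ n) {p : ℕ} (hp : p ≤ n) (hd : p ≠ d) :
    ∃ i, i < n ∧ cyc d n h i = p := by
  by_cases h1 : p < d
  · exact ⟨p, by omega, cyc_lt h h1⟩
  · exact ⟨p - 1, by omega, by rw [cyc_mid h (by omega) (by omega)]; omega⟩

theorem cyc_refl {d n : ℕ} (h : d ≤ n) {i j : ℕ} (hi : i < n) (hij : cyc d n h i < cyc d n h j)
    (hj : j < n) : i < j := by
  by_contra hc
  rcases Nat.lt_or_ge j i with h1 | h1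
  · have := cyc_mono h h1 hi; omega
  · have : i = j := by omega
    subst this; omega

section step
variable {n d : ℕ} {w : Perm ℕ}

theorem fx_del (hF : Fx (n+1) w) (hd : w d = n) (h : d ≤ n) : Fx n (w * cyc d n h) := by
  intro k hk
  rw [Perm.mul_apply]
  rcases Nat.lt_or_ge n k with h1 | h1
  · rw [cyc_gt h h1, hF k (by omega)]
  · have : k = n := by omega
    rw [this, cyc_n, hd]

theorem pos_le (hF : Fx (n+1) w) (hd : w d = n) : d ≤ n := by
  by_contra hc
  have := hF d (by omega)
  omega

theorem inv_del (hF : Fx (n+1) w) (hd : w d = n) (h : d ≤ n) :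
    invNum w = invNum (w * cyc d n h) + (n - d) := by
  have hF' := fx_del hF hd h
  change (InvS w).ncard = (InvS (w * cyc d n h)).ncard + (n - d)
  set s := cyc d n h with hs
  have e : InvS w = (fun p : ℕ × ℕ => (s p.1, s p.2)) '' InvS (w * s) ∪
      (fun j => (d, j)) '' (Finset.Ioc d n : Set ℕ) := by
    ext ⟨a, b⟩
    simp only [InvS, Set.mem_ofPred_eq, Set.mem_image, Set.mem_union, Prod.exists, Prod.mk.injEq,
      Finset.coe_Ioc, Set.mem_Ioc, Perm.mul_apply]
    constructor
    · rintro ⟨h1, h2⟩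
      have hb := hF.invS_lt h1 h2
      by_cases ha : a = d
      · right; exact ⟨b, by omega, ha.symm, rfl⟩
      · left
        have hbd : b ≠ d := by
          rintro rfl
          have := hF.lt (k := a) (by omega)
          omega
        obtain ⟨i, hi, rfl⟩ := cyc_surj h (p := a) (by omega) ha
        obtain ⟨j, hj, rfl⟩ := cyc_surj h (p := b) (by omega) hbd
        exact ⟨i, j, ⟨cyc_refl h hi h1 hj, h2⟩, rfl, rfl⟩
    · rintro (⟨i, j, ⟨h1, h2⟩, rfl, rfl⟩ | ⟨j, hj, rfl, rfl⟩)
      · have := hF'.invS_lt h1 h2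
        exact ⟨cyc_mono h h1 this, h2⟩
      · refine ⟨hj.1, ?_⟩
        have h1 := hF.lt (k := j) (by omega)
        have : w j ≠ w d := fun e => by have := w.injective e; omega
        omega
  rw [e, Set.ncard_union_eq _ (hF'.finite.image _) ((Finset.finite_toSet _).image _),
    Set.ncard_image_of_injective, Set.ncard_image_of_injective, Set.ncard_coe_finset, Nat.card_Ioc]
  · intro x y hxy; simpa using hxy
  · rintro ⟨a, b⟩ ⟨c, e⟩ hxy; simpa using hxy
  · rw [Set.disjoint_left]
    rintro _ ⟨⟨i, j⟩, ⟨h1, h2⟩, rfl⟩ ⟨k, hk, h3⟩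
    simp at h1 h2 h3
    have := hF'.invS_lt (a := i) (b := j) h1 h2
    rw [← cyc_n h] at h3
    have := s.injective h3.1
    omega

def CC (w : Perm ℕ) (d n : ℕ) (h : d ≤ n) (i : ℕ) : Prop :=
  (i < d → d < MX w⁻¹ i → MX w i < MX w⁻¹ i) ∧
  (d ≤ i → MX w⁻¹ i ≤ MX (w * cyc d n h) i + 1)

theorem NX_del (hF : Fx (n+1) w) (hd : w d = n) (h : d ≤ n) {i : ℕ} (hi : i < n) :
    MX (w * cyc d n h)⁻¹ i = if d < MX w⁻¹ i then MX w⁻¹ i - 1 else MX w⁻¹ i := by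
  have hF' := fx_del hF hd h
  obtain ⟨p, hp, e⟩ := exists_NX w i
  obtain ⟨q, hq, e'⟩ := exists_NX (w * cyc d n h) i
  have hqn : q < n := by
    by_contra hc
    have := hF' q (by omega)
    omega
  have hpn : p ≤ n := by
    by_contra hc
    have := hF p (by omega)
    omega
  have hpd : p ≠ d := by rintro rfl; omega
  obtain ⟨p', hp', rfl⟩ := cyc_surj h hpn hpd
  have h1 := le_NX w (p := cyc d n h q) (i := i) hq
  have h2 := le_NX (w * cyc d n h) (p := p') (i := i) hp
  rw [e] at h1 ⊢
  rw [e'] at h2 ⊢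
  have : ¬ p' < q := fun hc => by
    have := cyc_mono h hc hqn
    omega
  have : p' = q := by omega
  subst this
  simp only [cyc_apply]; grind

theorem mn_step (hF : Fx (n+1) w) (hd : w d = n) (h : d ≤ n) {i : ℕ} (hi : i < n) :
    mn (w * cyc d n h) i + (if d ≤ i then 1 else 0) ≤ mn w i ∧
    (mn (w * cyc d n h) i + (if d ≤ i then 1 else 0) = mn w i ↔ CC w d n h i) := by
  have hN := NX_del hF hd h hi
  unfold mn CC
  by_cases hdi : d ≤ i
  · have hM : MX w i = n := by
      have h1 := le_MX w hdi
      have h2 := MX_lt hF (i := i) (by omega)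
      omega
    have hN1 : i ≤ MX w⁻¹ i := self_le_MX _ _
    have hN2 : MX w⁻¹ i < n + 1 := MX_lt hF.inv (by omega)
    have hN3 : d < MX w⁻¹ i := by
      by_contra hc
      have hid : i = d := by omega
      subst hid
      have := pigeon w⁻¹ (Finset.range (i+1)) (Finset.range i) (by
        intro v hv
        simp only [Finset.mem_range] at hv ⊢
        have h1 := le_MX w⁻¹ (a := v) (i := i) (by omega)
        have h2 : w⁻¹ v ≠ i := fun e => by
          have : v = w i := by rw [← e, ap_inv]
          omega
        omega)
      simp at this
    rw [if_pos hN3] at hN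
    rw [if_pos hdi, hN, hM]
    constructor
    · omega
    · constructor
      · intro h1
        exact ⟨by omega, by omega⟩
      · rintro ⟨_, h2⟩
        have := h2 hdi
        omega
  · have hM : MX (w * cyc d n h) i = MX w i := by
      unfold MX
      apply Finset.sup_congr rfl
      intro a ha
      simp at ha
      simp [cyc_lt h (i := a) (by omega)]
    rw [if_neg hdi, hN, hM]
    constructor
    · split_ifs <;> omega
    · constructor
      · intro h1
        refine ⟨fun _ h2 => ?_, by omega⟩
        rw [if_pos h2] at h1
        omega
      · rintro ⟨h1, _⟩
        split_ifs with h2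
        · have := h1 (by omega) h2
          omega
        · omega

def LeN (w : Perm ℕ) (n : ℕ) : Prop :=
  invNum w + ∑ i ∈ Finset.range n, i ≤ ∑ i ∈ Finset.range n, mn w i
def EqN (w : Perm ℕ) (n : ℕ) : Prop :=
  invNum w + ∑ i ∈ Finset.range n, i = ∑ i ∈ Finset.range n, mn w i

theorem sum_step (hF : Fx (n+1) w) (hd : w d = n) (h : d ≤ n) (hL : LeN (w * cyc d n h) n) :
    LeN w (n+1) ∧ (EqN w (n+1) ↔ EqN (w * cyc d n h) n ∧ ∀ i < n, CC w d n h i) := by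
  have hI := inv_del hF hd h
  have hlast : mn w n = n := by
    have h1 := MX_lt hF (i := n) (by omega)
    have h2 : n ≤ MX w n := self_le_MX _ _
    have h3 : n ≤ MX w⁻¹ n := self_le_MX _ _
    unfold mn; omega
  have hsum : ∑ i ∈ Finset.range n, (mn (w * cyc d n h) i + (if d ≤ i then 1 else 0)) =
      ∑ i ∈ Finset.range n, mn (w * cyc d n h) i + (n - d) := by
    rw [Finset.sum_add_distrib]
    congr 1
    rw [← Finset.card_filter]
    have : Finset.filter (fun i => d ≤ i) (Finset.range n) = Finset.Ico d n := by
      ext x; simp; omega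
    rw [this, Nat.card_Ico]
  have hle : ∀ i ∈ Finset.range n, mn (w * cyc d n h) i + (if d ≤ i then 1 else 0) ≤ mn w i :=
    fun i hi => (mn_step hF hd h (by simpa using hi)).1
  have h1 := Finset.sum_le_sum hle
  have h2 := Finset.sum_eq_sum_iff_of_le hle
  have h3 : (∀ i ∈ Finset.range n, mn (w * cyc d n h) i + (if d ≤ i then 1 else 0) = mn w i) ↔
      ∀ i < n, CC w d n h i := by
    simp only [Finset.mem_range]
    exact forall₂_congr fun i hi => (mn_step hF hd h hi).2
  rw [← h3, ← h2]
  unfold LeN EqN at *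
  rw [Finset.sum_range_succ, Finset.sum_range_succ, hlast]
  rw [hsum] at h1 ⊢
  constructor
  · omega
  · constructor
    · intro h4; constructor <;> omega
    · rintro ⟨h4, h5⟩; omega

theorem leN : ∀ (n : ℕ) (w : Perm ℕ), Fx n w → LeN w n := by
  intro n
  induction n with
  | zero =>
    intro w hw
    have : w = 1 := by ext x; simp [hw x (by omega)]
    subst this
    have : InvS 1 = ∅ := by
      ext ⟨a, b⟩; simp [InvS]; omega
    have : invNum 1 = 0 := by
      change (InvS 1).ncard = 0
      rw [this]; simp
    simp [LeN, this]
  | succ n ih =>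
    intro w hw
    have hd : w (w⁻¹ n) = n := by simp
    have h := pos_le hw hd
    exact (sum_step hw hd h (ih _ (fx_del hw hd h))).1

theorem eqN_inv : EqN w⁻¹ n ↔ EqN w n := by
  unfold EqN mn
  rw [invNum_inv]
  simp only [inv_inv, min_comm]

/-- smooth implies the local conditions -/
theorem cc_of_smooth (hF : Fx (n+1) w) (hd : w d = n) (h : d ≤ n) (h1 : Avoids3412 w)
    (h2 : Avoids4231 w) {i : ℕ} (hi : i < n) : CC w d n h i := by
  have hinj : ∀ x y, w x = w y → x = y := fun x y e => w.injective e
  have hmax : ∀ x, x ≤ n → x ≠ d → w x < n := by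
    intro x hx hxd
    have := hF.lt (k := x) (by omega)
    have : w x ≠ w d := fun e => hxd (hinj _ _ e)
    omega
  obtain ⟨p, hp, e⟩ := exists_NX w i
  have hpn : p ≤ n := by
    by_contra hc
    have := hF p (by omega)
    omega
  have hafter : ∀ q, p < q → i < w q := by
    intro q hq
    by_contra hc
    have := le_NX w (p := q) (i := i) (by omega)
    omega
  constructor
  · intro hid hdN
    by_contra hc
    obtain ⟨a, ha, ea⟩ := exists_MX w i
    rw [e] at hdN hc
    rw [ea] at hc
    have han := hmax a (by omega) (by omega)
    have := pigeon w⁻¹ (Finset.range (w a)) (((Finset.range (p+1)).erase d).erase a) (by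
      intro v hv
      obtain ⟨q, rfl⟩ := w.surjective v
      simp at hv
      simp only [inv_ap, Finset.mem_erase, Finset.mem_range]
      refine ⟨by rintro rfl; omega, by rintro rfl; omega, ?_⟩
      by_contra hq
      have := hafter q (by omega)
      exact h1 ⟨a, d, p, q, by omega, by omega, by omega, by omega, by omega, by omega⟩)
    rw [Finset.card_erase_of_mem (by simp; omega), Finset.card_erase_of_mem (by simp; omega)] at this
    simp only [Finset.card_range] at this
    omega
  · intro hid
    by_contra hc
    rw [e] at hc
    set m := MX (w * cyc d n h) i with hm
    have hmi : i ≤ m := self_le_MX _ _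
    have hpre : ∀ x, x ≤ i + 1 → x ≠ d → w x ≤ m := by
      intro x hx hxd
      by_cases h3 : x < d
      · have := le_MX (w * cyc d n h) (a := x) (i := i) (by omega)
        rwa [Perm.mul_apply, cyc_lt h h3] at this
      · have := le_MX (w * cyc d n h) (a := x - 1) (i := i) (by omega)
        rw [Perm.mul_apply, cyc_mid h (by omega) (by omega)] at this
        rwa [Nat.sub_add_cancel (by omega)] at this
    by_cases hA : ∃ y, i + 2 ≤ y ∧ y < p ∧ m < w y
    · obtain ⟨y, hy1, hy2, hy3⟩ := hA
      have hx : ∀ x, d < x → x ≤ i + 1 → w x < w p := by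
        intro x hx1 hx2
        by_contra hx3
        have : w x ≠ w p := fun e => by have := hinj _ _ e; omega
        have := hpre x hx2 (by omega)
        have := hmax y (by omega) (by omega)
        exact h2 ⟨d, x, y, p, by omega, by omega, by omega, by omega, by omega, by omega⟩
      have hx' : ∀ c, c < d → w c < w p := by
        intro c hcd
        by_contra hx3
        have : w c ≠ w p := fun e => by have := hinj _ _ e; omega
        have := hx (d+1) (by omega) (by omega)
        have := hmax c (by omega) (by omega)
        exact h1 ⟨c, d, d+1, p, by omega, by omega, by omega, by omega, by omega, by omega⟩
      have := pigeon w ((Finset.range (i+2)).erase d) (Finset.range (w p)) (by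
        intro x hx4
        simp at hx4 ⊢
        rcases lt_or_gt_of_ne hx4.1 with h5 | h5
        · exact hx' x h5
        · exact hx x h5 (by omega))
      rw [Finset.card_erase_of_mem (by simp; omega)] at this
      simp only [Finset.card_range] at this
      omega
    · push Not at hA
      have := pigeon w ((Finset.range (p+1)).erase d) (Finset.range (m+1)) (by
        intro x hx
        simp at hx ⊢
        by_cases h3 : x ≤ i + 1
        · have := hpre x h3 hx.1; omega
        · by_cases h4 : x = p
          · subst h4; omega
          · have := hA x (by omega) (by omega); omega)
      rw [Finset.card_erase_of_mem (by simp; omega)] at this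
      simp only [Finset.card_range] at this
      omega

theorem smooth_del (hF : Fx (n+1) w) (hd : w d = n) (h : d ≤ n) (h1 : Avoids3412 w)
    (h2 : Avoids4231 w) : Avoids3412 (w * cyc d n h) ∧ Avoids4231 (w * cyc d n h) := by
  have hF' := fx_del hF hd h
  constructor
  · rintro ⟨a, b, c, e, hab, hbc, hce, h3, h4, h5⟩
    have := hF'.invS_lt (a := a) (b := e) (by omega) (by omega)
    exact h1 ⟨_, _, _, _, cyc_mono h hab (by omega), cyc_mono h hbc (by omega),
      cyc_mono h hce this, h3, h4, h5⟩
  · rintro ⟨a, b, c, e, hab, hbc, hce, h3, h4, h5⟩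
    have := hF'.invS_lt (a := a) (b := e) (by omega) (by omega)
    exact h2 ⟨_, _, _, _, cyc_mono h hab (by omega), cyc_mono h hbc (by omega),
      cyc_mono h hce this, h3, h4, h5⟩

theorem av3412_lift (hF : Fx (n+1) w) (hd : w d = n) (h : d ≤ n)
    (h1 : Avoids3412 (w * cyc d n h)) {a b c e : ℕ} (hab : a < b) (hbc : b < c) (hce : c < e)
    (h3 : w c < w e) (h4 : w e < w a) (h5 : w a < w b) : b = d := by
  by_contra hbd
  have hen := hF.invS_lt (a := a) (b := e) (by omega) (by omega)
  have hbn := hF.lt (k := b) (by omega)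
  obtain ⟨a, ha, rfl⟩ := cyc_surj h (p := a) (by omega) (by rintro rfl; omega)
  obtain ⟨b, hb, rfl⟩ := cyc_surj h (p := b) (by omega) hbd
  obtain ⟨c, hc, rfl⟩ := cyc_surj h (p := c) (by omega) (by rintro rfl; omega)
  obtain ⟨e, he, rfl⟩ := cyc_surj h (p := e) (by omega) (by rintro rfl; omega)
  exact h1 ⟨a, b, c, e, cyc_refl h ha hab hb, cyc_refl h hb hbc hc, cyc_refl h hc hce he, h3, h4, h5⟩

theorem av4231_lift (hF : Fx (n+1) w) (hd : w d = n) (h : d ≤ n)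
    (h1 : Avoids4231 (w * cyc d n h)) {a b c e : ℕ} (hab : a < b) (hbc : b < c) (hce : c < e)
    (h3 : w e < w b) (h4 : w b < w c) (h5 : w c < w a) : a = d := by
  by_contra had
  have hen := hF.invS_lt (a := a) (b := e) (by omega) (by omega)
  have hbn := hF.lt (k := a) (by omega)
  obtain ⟨a, ha, rfl⟩ := cyc_surj h (p := a) (by omega) had
  obtain ⟨b, hb, rfl⟩ := cyc_surj h (p := b) (by omega) (by rintro rfl; omega)
  obtain ⟨c, hc, rfl⟩ := cyc_surj h (p := c) (by omega) (by rintro rfl; omega)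
  obtain ⟨e, he, rfl⟩ := cyc_surj h (p := e) (by omega) (by rintro rfl; omega)
  exact h1 ⟨a, b, c, e, cyc_refl h ha hab hb, cyc_refl h hb hbc hc, cyc_refl h hc hce he, h3, h4, h5⟩

/-- The first entry exceeding `e = w n`, when some later entry `x` is below `e`. -/
theorem first_big {e x c0 : ℕ} (hcd : c0 < d) (hc : e < w c0) (hx : d < x) (hxe : w x < e)
    (hne : ∀ p, p < d → w p ≠ e) : ∃ c, c < d ∧ c < e ∧ e < w c := by
  classical
  have hex : ∃ c, e < w c := ⟨c0, hc⟩
  refine ⟨Nat.find hex, ?_, ?_, Nat.find_spec hex⟩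
  · exact lt_of_le_of_lt (Nat.find_le hc) hcd
  · set c := Nat.find hex with hcdef
    have hle : c ≤ c0 := Nat.find_le hc
    have := pigeon w (Finset.range c) ((Finset.range e).erase (w x)) (by
      intro p hp
      simp only [Finset.mem_range, Finset.mem_erase] at hp ⊢
      constructor
      · intro e
        have := w.injective e
        omega
      · have h2 : ¬ e < w p := Nat.find_min hex hp
        have := hne p (by omega)
        omega)
    rw [Finset.card_erase_of_mem (by simpa using hxe)] at this
    simp only [Finset.card_range] at this
    omega

theorem no3412 {e : ℕ} (hd : w d = n) (he : w n = e)
    (h : d ≤ n) (h' : e ≤ n) (hC : ∀ i < n, CC w d n h i) (hC' : ∀ i < n, CC w⁻¹ e n h' i)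
    {c x : ℕ} (hcd : c < d) (hc : e < w c) (hx : d < x) (hxe : w x < e) : False := by
  obtain ⟨c1, h1, h2, h3⟩ := first_big hcd hc hx hxe (by
    rintro p hp hpe
    have : p = n := w.injective (by omega)
    omega)
  obtain ⟨v, h4, h5, h6⟩ := first_big (w := w⁻¹) (d := e) (e := d) (x := w c) (c0 := w x) hxe
    (by simpa using hx) hc (by simpa using hcd) (by
    rintro p hp hpe
    have : p = w d := by rw [← hpe]; simp
    omega)
  have a1 := (hC (max c1 v) (by omega)).1 (by omega) (by
    have := le_MX w⁻¹ (a := v) (i := max c1 v) (by omega)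
    omega)
  have a2 := (hC' (max c1 v) (by omega)).1 (by omega) (by
    have := le_MX w (a := c1) (i := max c1 v) (by omega)
    rw [inv_inv]
    omega)
  rw [inv_inv] at a2
  omega

theorem no4231 {e : ℕ} (hF : Fx (n+1) w) (hd : w d = n) (he : w n = e) (h : d ≤ n) (hed : e ≤ d)
    (hC : ∀ i < n, CC w d n h i) (hA : Avoids4231 (w * cyc d n h)) {x y : ℕ}
    (hdx : d < x) (hxy : x < y) (hyn : y < n) (h1 : e < w x) (h2 : w x < w y) (h3 : w y < n) :
    False := by
  have hF' := fx_del hF hd h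
  have c2 := (hC d (by omega)).2 le_rfl
  have hN := le_NX w (p := n) (i := d) (by omega)
  obtain ⟨g, hg, eg⟩ := exists_MX (w * cyc d n h) d
  have hgn := hF'.lt (k := g) (by omega)
  have vx : (w * cyc d n h) (x-1) = w x := by
    rw [Perm.mul_apply, cyc_mid h (by omega) (by omega), Nat.sub_add_cancel (by omega)]
  have vy : (w * cyc d n h) (y-1) = w y := by
    rw [Perm.mul_apply, cyc_mid h (by omega) (by omega), Nat.sub_add_cancel (by omega)]
  have vn : (w * cyc d n h) (n-1) = e := by
    rw [Perm.mul_apply, cyc_mid h (by omega) (by omega), Nat.sub_add_cancel (by omega), he]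
  have gx : g ≠ x - 1 := by rintro rfl; omega
  have gy : w y ≠ (w * cyc d n h) g := fun e => by
    rw [← vy] at e
    have := (w * cyc d n h).injective e
    omega
  exact hA ⟨g, x-1, y-1, n-1, by omega, by omega, by omega, by omega, by omega, by omega⟩

end step

theorem main_iff : ∀ (n : ℕ) (w : Perm ℕ), Fx n w → (Avoids3412 w ∧ Avoids4231 w ↔ EqN w n) := by
  intro n
  induction n with
  | zero =>
    intro w hw
    have : w = 1 := by ext x; simp [hw x (by omega)]
    subst this
    have : InvS 1 = ∅ := by
      ext ⟨a, b⟩; simp [InvS]; omega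
    have : invNum 1 = 0 := by
      change (InvS 1).ncard = 0
      rw [this]; simp
    simp only [EqN, this, Finset.range_zero, Finset.sum_empty, Nat.add_zero, iff_true]
    constructor
    · rintro ⟨a, b, c, d, h⟩; simp at h; omega
    · rintro ⟨a, b, c, d, h⟩; simp at h; omega
  | succ n ih =>
    intro w hw
    obtain ⟨d, hd⟩ := w.surjective n
    have h := pos_le hw hd
    have st := sum_step hw hd h (leN n _ (fx_del hw hd h))
    constructor
    · rintro ⟨h1, h2⟩
      exact st.2.2 ⟨(ih _ (fx_del hw hd h)).1 (smooth_del hw hd h h1 h2),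
        fun i hi => cc_of_smooth hw hd h h1 h2 hi⟩
    · intro hE
      obtain ⟨hE1, hC⟩ := st.2.1 hE
      obtain ⟨s1, s2⟩ := (ih _ (fx_del hw hd h)).2 hE1
      have hw' := hw.inv
      obtain ⟨e, he⟩ : ∃ e, w n = e := ⟨_, rfl⟩
      have he' : w⁻¹ e = n := by rw [← he]; simp
      have hd' : w⁻¹ n = d := by rw [← hd]; simp
      have h' := pos_le hw' he'
      have st' := sum_step hw' he' h' (leN n _ (fx_del hw' he' h'))
      obtain ⟨hE1', hC'⟩ := st'.2.1 (eqN_inv.2 hE)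
      obtain ⟨s1', s2'⟩ := (ih _ (fx_del hw' he' h')).2 hE1'
      constructor
      · rintro ⟨a, b, c, f, hab, hbc, hcf, h3, h4, h5⟩
        have hb := av3412_lift hw hd h s1 hab hbc hcf h3 h4 h5
        have hf := av3412_lift hw' he' h' s1' h3 h4 h5 (by simpa using hab) (by simpa using hbc)
          (by simpa using hcf)
        subst hb
        have : f = n := w.injective (by omega)
        subst this
        exact no3412 hd he h h' hC hC' hab (by omega) hbc (by omega)
      · rintro ⟨a, b, c, f, hab, hbc, hcf, h3, h4, h5⟩
        have ha := av4231_lift hw hd h s2 hab hbc hcf h3 h4 h5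
        have hf := av4231_lift hw' he' h' s2' h3 h4 h5 (by simpa using hab) (by simpa using hbc)
          (by simpa using hcf)
        subst ha
        have : f = n := w.injective (by omega)
        subst this
        rcases le_total e a with hl | hl
        · exact no4231 hw hd he h hl hC s2 hab hbc hcf (by omega) h4 (by omega)
        · exact no4231 hw' he' hd' h' hl hC' s2' (x := w b) (y := w c) (by omega) h4 (by omega)
            (by simpa using hab) (by simpa using hbc) (by simpa using hcf)

theorem stmt2 (n : ℕ) (w : Perm ℕ) (hw : ∀ k, n ≤ k → w k = k) :
    (Avoids3412 w ∧ Avoids4231 w) ↔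
      invNum w = Set.ncard {t : Perm ℕ | t.IsSwap ∧ BruhatLE t w} := by
  rw [main_iff n w hw, EqN, ← count_swaps (n := n) (w := w) hw]
  omega
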